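/- Let A be a finite-dimensional commutative ℂ-algebra of dimension n whose annihilator Ann(A) has dimension m ≠ 0. Then there exist a commutative ℂ-algebra B of dimension n − m, a ℂ-vector space V of dimension m, and a symmetric bilinear map θ : B × B → V with Ann(B) ∩ Ann(θ) = 0, such that A is isomorphic as a ℂ-algebra to the central extension B_θ, and moreover the quotient algebra A/Ann(A) is isomorphic to B. -/

import Mathlib

/-- The annihilator `Ann(A) = {x ∈ A : xA = 0}` of a (nonunital, nonassociative)
`ℂ`-algebra, as a submodule. -/
def annSub (A : Type*) [NonUnitalNonAssocRing A] [Module ℂ A] [IsScalarTower ℂ A A] :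
    Submodule ℂ A where
  carrier := {x | ∀ y, x * y = 0}
  add_mem' := by
    intro a b ha hb y
    rw [add_mul, ha y, hb y, add_zero]
  zero_mem' := fun y => zero_mul y
  smul_mem' := by
    intro c x hx y
    rw [smul_mul_assoc, hx y, smul_zero]

/-- Every finite-dimensional commutative `ℂ`-algebra `A` of dimension `n` with annihilator of
dimension `m ≠ 0` is a central extension `B_θ` of an `(n-m)`-dimensional commutative algebra `B`
(realized on the carrier `Fin (n-m) → ℂ`, with commutative bilinear multiplication `μ`) by an
`m`-dimensional space `V = Fin m → ℂ`, via a symmetric bilinear map `θ` with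
`Ann(B) ∩ Ann(θ) = 0`; moreover `A / Ann(A) ≅ B` as algebras. -/
theorem stmt0 (A : Type) [NonUnitalNonAssocCommRing A] [Module ℂ A]
    [SMulCommClass ℂ A A] [IsScalarTower ℂ A A] [FiniteDimensional ℂ A]
    (n m : ℕ) (hn : Module.finrank ℂ A = n)
    (hm : Module.finrank ℂ (annSub A) = m) (hm0 : m ≠ 0) :
    ∃ (μ : (Fin (n - m) → ℂ) →ₗ[ℂ] (Fin (n - m) → ℂ) →ₗ[ℂ] (Fin (n - m) → ℂ))
      (θ : (Fin (n - m) → ℂ) →ₗ[ℂ] (Fin (n - m) → ℂ) →ₗ[ℂ] (Fin m → ℂ)),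
      (∀ x y, μ x y = μ y x) ∧
      (∀ x y, θ x y = θ y x) ∧
      (∀ x : Fin (n - m) → ℂ, (∀ y, μ x y = 0) → (∀ y, θ x y = 0) → x = 0) ∧
      (∃ e : A ≃ₗ[ℂ] (Fin (n - m) → ℂ) × (Fin m → ℂ),
        ∀ x y : A, e (x * y) = (μ (e x).1 (e y).1, θ (e x).1 (e y).1)) ∧
      (∃ g : (A ⧸ annSub A) ≃ₗ[ℂ] (Fin (n - m) → ℂ),
        ∀ x y : A,
          g (Submodule.Quotient.mk (x * y))
            = μ (g (Submodule.Quotient.mk x)) (g (Submodule.Quotient.mk y))) := by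
  classical
  have hle : Module.finrank ℂ (A ⧸ annSub A) = n - m := by
    have := Submodule.finrank_quotient_add_finrank (annSub A)
    omega
  let g : (A ⧸ annSub A) ≃ₗ[ℂ] (Fin (n - m) → ℂ) :=
    LinearEquiv.ofFinrankEq _ _ (by rw [hle]; simp)
  let h : annSub A ≃ₗ[ℂ] (Fin m → ℂ) :=
    LinearEquiv.ofFinrankEq _ _ (by rw [hm]; simp)
  obtain ⟨p, hp⟩ := LinearMap.exists_leftInverse_of_injective (annSub A).subtype
    (Submodule.ker_subtype _)
  let f : A →ₗ[ℂ] (Fin (n - m) → ℂ) × (Fin m → ℂ) :=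
    LinearMap.prod (g.toLinearMap ∘ₗ (annSub A).mkQ) (h.toLinearMap ∘ₗ p)
  have hf : Function.Injective f := by
    rw [injective_iff_map_eq_zero]
    intro x hx
    have h1 : g (Submodule.Quotient.mk x) = 0 := congrArg Prod.fst hx
    have h2 : h (p x) = 0 := congrArg Prod.snd hx
    rw [LinearEquiv.map_eq_zero_iff] at h1 h2
    have h3 : x ∈ annSub A := (Submodule.Quotient.mk_eq_zero _).1 h1
    have h4 : p x = ⟨x, h3⟩ := LinearMap.congr_fun hp ⟨x, h3⟩
    rw [h2] at h4
    exact (congrArg Subtype.val h4).symm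
  have hdim : Module.finrank ℂ A
      = Module.finrank ℂ ((Fin (n - m) → ℂ) × (Fin m → ℂ)) := by
    have := Submodule.finrank_quotient_add_finrank (annSub A)
    rw [Module.finrank_prod]
    simp only [Module.finrank_fin_fun]
    omega
  let e : A ≃ₗ[ℂ] (Fin (n - m) → ℂ) × (Fin m → ℂ) :=
    LinearMap.linearEquivOfInjective f hf hdim
  have he : ∀ x, (e x).1 = g (Submodule.Quotient.mk x) := fun x => rfl
  let s : (Fin (n - m) → ℂ) →ₗ[ℂ] A := e.symm.toLinearMap ∘ₗ LinearMap.inl ℂ _ _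
  have hes : ∀ v, e (s v) = (v, 0) := fun v => e.apply_symm_apply _
  let M := (LinearMap.mul ℂ A).compl₁₂ s s
  have hM : ∀ u v, M u v = s u * s v := fun u v => rfl
  have hs : ∀ x y : A, s (e x).1 * y = x * y := by
    intro x y
    have h1 : g (Submodule.Quotient.mk (s (e x).1)) = g (Submodule.Quotient.mk x) := by
      rw [← he, ← he, hes]
    have h2 := (Submodule.Quotient.eq _).1 (g.injective h1)
    have h3 : (s (e x).1 - x) * y = 0 := h2 y
    rwa [sub_mul, sub_eq_zero] at h3
  have hss : ∀ x y : A, s (e x).1 * s (e y).1 = x * y := by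
    intro x y
    rw [hs, mul_comm, hs, mul_comm]
  refine ⟨M.compr₂ (LinearMap.fst ℂ _ _ ∘ₗ e.toLinearMap),
    M.compr₂ (LinearMap.snd ℂ _ _ ∘ₗ e.toLinearMap), ?_, ?_, ?_, ⟨e, ?_⟩, ⟨g, ?_⟩⟩
  · intro x y
    simp [hM, mul_comm (s x)]
  · intro x y
    simp [hM, mul_comm (s x)]
  · intro x h1 h2
    have h3 : s x ∈ annSub A := by
      intro y
      have h4 : e (s x * s (e y).1) = 0 := Prod.ext (h1 (e y).1) (h2 (e y).1)
      rw [LinearEquiv.map_eq_zero_iff] at h4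
      rwa [mul_comm, hs, mul_comm] at h4
    have h5 := he (s x)
    rw [(Submodule.Quotient.mk_eq_zero _).2 h3, hes, map_zero] at h5
    exact h5
  · intro x y
    change e (x * y) = ((e (s (e x).1 * s (e y).1)).1, (e (s (e x).1 * s (e y).1)).2)
    rw [hss]
  · intro x y
    rw [← he, ← he, ← he]
    change (e (x * y)).1 = (e (s (e x).1 * s (e y).1)).1
    rw [hss]
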